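/- Every planar graph G contains a matching M such that the Alon–Tarsi number of G − M is at most 4; i.e., the graph polynomial of G − M has a non-vanishing monomial in which every vertex variable has exponent at most 3. -/

import Mathlib

open MvPolynomial Finset

/- The graph polynomial `P_G = ∏_{uv ∈ E(G), u < v} (x_v - x_u)`. -/
open scoped Classical in
noncomputable def graphPoly {V : Type*} [Fintype V] [LinearOrder V]
    (G : SimpleGraph V) : MvPolynomial V ℝ :=
  ∏ p ∈ Finset.univ.filter (fun p : V × V => G.Adj p.1 p.2 ∧ p.1 < p.2),
    (X p.2 - X p.1)

/- The signed graph polynomial `P_{G,σ} = ∏_{uv ∈ E(G), u < v} (x_v - σ(uv)·x_u)`. -/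
open scoped Classical in
noncomputable def signedGraphPoly {V : Type*} [Fintype V] [LinearOrder V]
    (G : SimpleGraph V) (σ : Sym2 V → ℤ) : MvPolynomial V ℤ :=
  ∏ p ∈ Finset.univ.filter (fun p : V × V => G.Adj p.1 p.2 ∧ p.1 < p.2),
    (X p.2 - C (σ s(p.1, p.2)) * X p.1)

/- `H` is a minor of `G`: branch sets. -/
def SimpleGraph.IsMinor {W V : Type*} (H : SimpleGraph W) (G : SimpleGraph V) : Prop :=
  ∃ f : W → Set V,
    (∀ w, (G.induce (f w)).Connected) ∧
    (∀ w₁ w₂, w₁ ≠ w₂ → Disjoint (f w₁) (f w₂)) ∧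
    (∀ w₁ w₂, H.Adj w₁ w₂ → ∃ v₁ ∈ f w₁, ∃ v₂ ∈ f w₂, G.Adj v₁ v₂)

/- A graph is planar iff it has no `K₅` and no `K₃,₃` minor (Wagner's theorem). -/
def SimpleGraph.IsPlanar {V : Type*} (G : SimpleGraph V) : Prop :=
  ¬ SimpleGraph.IsMinor (completeGraph (Fin 5)) G ∧
  ¬ SimpleGraph.IsMinor (completeBipartiteGraph (Fin 3) (Fin 3)) G

/-!
As in Thomassen's list colouring theorem, a stronger statement is proved by induction: vertices on
the outer boundary get exponent at most two, or at most one if they are matched, and up to two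
adjacent boundary vertices, the roots, stay unmatched and do not occur in the monomial. There is no
embedding: the vertices deleted so far form a connected set `A`, and the boundary consists of the
neighbours of `A`.

If no neighbour of a boundary vertex `z` other than a root lies on the boundary, then `z` is deleted
and its factors `x_z - x_u` raise the exponents of its neighbours. Otherwise, choose `z` next to a
root `v`. If `v` and some `w` are its only boundary neighbours, deleting `z` works up to one unit of
exponent; an exchange argument on the coefficients recovers it, possibly adding an edge at `z` to
the matching. If there are three boundary neighbours, contracting `A` together with paths that avoid
`z` would give a `K₅` or `K₃,₃` minor, unless `z` and one of these neighbours separate the graph;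
then the two sides are treated one after the other, the separating edge being the root edge of the
second one.
-/

section Polynomials

variable {σ R : Type*} [CommRing R] {f g : MvPolynomial σ R} {η κ : σ →₀ ℕ} {z w : σ}
  {N Q : Finset σ}

lemma sum_single_one_apply [DecidableEq σ] (N : Finset σ) (v : σ) :
    (∑ u ∈ N, Finsupp.single u 1 : σ →₀ ℕ) v = if v ∈ N then 1 else 0 := by
  simp [Finsupp.finsetSum_apply, Finsupp.single_apply]

lemma sum_single_one_apply_of_notMem (hz : z ∉ N) :
    (∑ u ∈ N, Finsupp.single u 1 : σ →₀ ℕ) z = 0 := by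
  classical rw [sum_single_one_apply, if_neg hz]

lemma coeff_add_single_mul_X_sub_X (f : MvPolynomial σ R) (hzw : z ≠ w) (hη : η w = 0) :
    coeff (η + Finsupp.single z 1) (f * (X z - X w)) = coeff η f := by
  classical
  rw [mul_sub, coeff_sub, coeff_mul_X, coeff_mul_X', if_neg (by simp [hη, hzw]), sub_zero]

lemma coeff_add_single_mul_prod_X_sub_X (f : MvPolynomial σ R) (hz : z ∉ N)
    (hη : ∀ u ∈ N, η u = 0) :
    coeff (η + Finsupp.single z #N) (f * ∏ u ∈ N, (X z - X u)) = coeff η f := by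
  classical
  induction N using Finset.induction_on with
  | empty => simp
  | insert u N huN ih =>
    obtain ⟨hzu, hzN⟩ : z ≠ u ∧ z ∉ N := by simpa using hz
    rw [prod_insert huN, card_insert_of_notMem huN, Finsupp.single_add, mul_left_comm,
      mul_comm, ← add_assoc, coeff_add_single_mul_X_sub_X _ hzu,
      ih hzN fun x hx ↦ hη x (mem_insert_of_mem hx)]
    simp [hη u (mem_insert_self u N), hzu.symm]

lemma coeff_add_sum_single_mul_prod_X_sub_X (f : MvPolynomial σ R) (hz : z ∉ N) (hη : η z = 0) :
    coeff (η + ∑ u ∈ N, Finsupp.single u 1) (f * ∏ u ∈ N, (X z - X u)) =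
      (-1) ^ #N * coeff η f := by
  classical
  induction N using Finset.induction_on with
  | empty => simp
  | insert u N huN ih =>
    obtain ⟨hzu, hzN⟩ : z ≠ u ∧ z ∉ N := by simpa using hz
    have hz0 : (η + ∑ x ∈ N, Finsupp.single x 1 : σ →₀ ℕ) z = 0 := by
      rw [Finsupp.add_apply, hη, sum_single_one_apply_of_notMem hzN]
    calc coeff (η + ∑ x ∈ insert u N, Finsupp.single x 1) (f * ∏ x ∈ insert u N, (X z - X x))
        = coeff (η + ∑ x ∈ N, Finsupp.single x 1 + Finsupp.single u 1)
            (-(f * ∏ x ∈ N, (X z - X x)) * (X u - X z)) := by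
          rw [prod_insert huN, sum_insert huN]; congr 1
          · abel
          · ring
      _ = (-1) ^ #(insert u N) * coeff η f := by
          rw [coeff_add_single_mul_X_sub_X _ hzu.symm hz0, coeff_neg, ih hzN,
            card_insert_of_notMem huN]
          ring

lemma coeff_add_single_add_sum_single_mul_prod_X_sub_X (hf : z ∉ f.vars) (hz : z ∉ N)
    (hκ : κ z = 0) :
    coeff (κ + Finsupp.single z 1 + ∑ u ∈ N, Finsupp.single u 1) (f * ∏ u ∈ N, (X z - X u)) =
      (-1) ^ (#N + 1) * ∑ u ∈ N, coeff (κ + Finsupp.single u 1) f := by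
  classical
  induction N using Finset.induction_on with
  | empty =>
    simpa using by_contra fun h ↦ by
      simpa using mem_support_notMem_vars_zero (mem_support_iff.2 h) hf
  | insert u N huN ih =>
    obtain ⟨hzu, hzN⟩ : z ≠ u ∧ z ∉ N := by simpa using hz
    have hκu : (κ + Finsupp.single u 1 : σ →₀ ℕ) z = 0 := by simp [hκ, hzu.symm]
    calc coeff (κ + Finsupp.single z 1 + ∑ x ∈ insert u N, Finsupp.single x 1)
            (f * ∏ x ∈ insert u N, (X z - X x))
        = coeff (κ + Finsupp.single u 1 + ∑ x ∈ N, Finsupp.single x 1 + Finsupp.single z 1)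
              (f * (∏ x ∈ N, (X z - X x)) * X z) -
            coeff (κ + Finsupp.single z 1 + ∑ x ∈ N, Finsupp.single x 1 + Finsupp.single u 1)
              (f * (∏ x ∈ N, (X z - X x)) * X u) := by
          rw [prod_insert huN, sum_insert huN, mul_comm (X z - X u), ← mul_assoc, mul_sub,
            coeff_sub]
          congr 2 <;> abel
      _ = (-1) ^ (#(insert u N) + 1) *
            ∑ x ∈ insert u N, coeff (κ + Finsupp.single x 1) f := by
          rw [coeff_mul_X, coeff_mul_X, coeff_add_sum_single_mul_prod_X_sub_X f hzN hκu,
            ih hzN, card_insert_of_notMem huN, sum_insert huN]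
          ring

-- One factor `X z` has to be chosen from the product over `insert w N`. Choosing it from the factor
-- of `w` gives the coefficient of `η` itself; if the total cancels, another choice must contribute.
lemma mem_support_mul_prod_X_sub_X_or_exists_exchange [DecidableEq σ] (hη : η ∈ f.support)
    (hf : z ∉ f.vars) (hz : z ∉ N) (hzw : z ≠ w) (hw : w ∉ N) :
    η + ∑ u ∈ N, Finsupp.single u 1 + Finsupp.single z 1 ∈
        (f * ∏ u ∈ insert w N, (X z - X u)).support ∨
      ∃ κ, κ + Finsupp.single w 1 = η ∧ ∃ u ∈ N, κ + Finsupp.single u 1 ∈ f.support := by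
  have hηz : η z = 0 := mem_support_notMem_vars_zero hη hf
  simp only [mem_support_iff] at hη ⊢
  rcases eq_or_ne (η w) 0 with hηw | hηw
  · left
    rw [prod_insert hw, mul_comm (X z - X w), ← mul_assoc, coeff_add_single_mul_X_sub_X _ hzw,
      coeff_add_sum_single_mul_prod_X_sub_X f hz hηz]
    · simpa using hη
    · rw [Finsupp.add_apply, hηw, sum_single_one_apply_of_notMem hw]
  obtain ⟨κ, rfl⟩ : ∃ κ : σ →₀ ℕ, κ + Finsupp.single w 1 = η :=
    ⟨_, tsub_add_cancel_of_le (by simpa [Nat.one_le_iff_ne_zero] using hηw)⟩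
  by_cases hex : ∃ u ∈ N, coeff (κ + Finsupp.single u 1) f ≠ 0
  · exact .inr ⟨κ, rfl, hex⟩
  push Not at hex
  have hexp : κ + Finsupp.single w 1 + ∑ u ∈ N, Finsupp.single u 1 + Finsupp.single z 1 =
      κ + Finsupp.single z 1 + ∑ u ∈ insert w N, Finsupp.single u 1 := by
    rw [sum_insert hw]; abel
  left
  rw [hexp, coeff_add_single_add_sum_single_mul_prod_X_sub_X hf (by simp [hz, hzw])
    (by simpa [hzw.symm] using hηz), sum_insert hw, sum_eq_zero hex, add_zero]
  simpa using hη

lemma mem_support_mul_prod_X_sub_X [DecidableEq σ] (hη : η ∈ f.support)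
    (hηz : η z = 0) (hz : z ∉ N) (hQN : Q ⊆ N) (hηQ : ∀ u ∈ Q, η u = 0) :
    η + ∑ u ∈ N \ Q, Finsupp.single u 1 + Finsupp.single z #Q ∈
      (f * ∏ u ∈ N, (X z - X u)).support := by
  rw [← prod_sdiff hQN, ← mul_assoc, mem_support_iff, coeff_add_single_mul_prod_X_sub_X,
    coeff_add_sum_single_mul_prod_X_sub_X f (fun h ↦ hz (sdiff_subset h)) hηz]
  · simpa using hη
  · exact fun h ↦ hz (hQN h)
  · intro u hu
    rw [Finsupp.add_apply, hηQ u hu, sum_single_one_apply_of_notMem (by simp [hu])]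

lemma support_eq_of_associated [IsDomain R] (h : Associated f g) :
    f.support = g.support := by
  obtain ⟨u, rfl⟩ := h
  obtain ⟨c, hc, hu⟩ := isUnit_iff_eq_C_of_isReduced.1 u.isUnit
  rw [hu, mul_comm, C_mul', support_smul_eq hc.ne_zero]

lemma add_mem_support_mul_of_isHomogeneous [NoZeroDivisors R] {η₁ η₂ : σ →₀ ℕ} {n : ℕ}
    (hg : g.IsHomogeneous n) (h₁ : η₁ ∈ f.support) (h₂ : η₂ ∈ g.support)
    (hf : ∀ v ∈ f.vars, η₂ v = 0) :
    η₁ + η₂ ∈ (f * g).support := by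
  classical
  rw [mem_support_iff, coeff_mul, sum_eq_single (η₁, η₂)]
  · exact mul_ne_zero (mem_support_iff.1 h₁) (mem_support_iff.1 h₂)
  · rintro ⟨α, β⟩ hαβ hne
    by_contra hcoeff
    have hα : α ∈ f.support := mem_support_iff.2 (left_ne_zero_of_mul hcoeff)
    have hβ : coeff β g ≠ 0 := right_ne_zero_of_mul hcoeff
    replace hαβ : α + β = η₁ + η₂ := mem_antidiagonal.1 hαβ
    have hle : η₂ ≤ β := fun v ↦ by
      by_cases hv : v ∈ f.vars
      · simp [hf v hv]
      · simpa [mem_support_notMem_vars_zero hα hv, mem_support_notMem_vars_zero h₁ hv] using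
          (DFunLike.congr_fun hαβ v).ge
    have hdegree : β.degree = η₂.degree := by
      simp only [Finsupp.degree_eq_weight_one]
      exact (hg hβ).trans (hg (mem_support_iff.1 h₂)).symm
    obtain ⟨γ, rfl⟩ := exists_add_of_le hle
    obtain rfl : γ = 0 := (Finsupp.degree_eq_zero_iff γ).1 (by simpa using hdegree)
    exact hne (by simpa using hαβ)
  · simp

end Polynomials

section GraphPoly

variable {V : Type*} [Fintype V] [LinearOrder V] {H H₁ H₂ : SimpleGraph V} {η : V →₀ ℕ}
  {v w z : V} {N Q : Finset V}

@[simp] lemma graphPoly_bot : graphPoly (⊥ : SimpleGraph V) = 1 := by simp [graphPoly]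

lemma graphPoly_sup (h : Disjoint H₁ H₂) :
    graphPoly (H₁ ⊔ H₂) = graphPoly H₁ * graphPoly H₂ := by
  classical
  unfold graphPoly
  rw [← prod_union]
  · congr 1
    ext p
    simp only [mem_filter, mem_univ, SimpleGraph.sup_adj, mem_union]
    tauto
  · refine disjoint_left.2 fun p hp₁ hp₂ ↦ ?_
    have hadj : (H₁ ⊓ H₂).Adj p.1 p.2 := ⟨(mem_filter.1 hp₁).2.1, (mem_filter.1 hp₂).2.1⟩
    exact h.le_bot hadj

lemma associated_graphPoly_edge (h : v ≠ w) :
    Associated (graphPoly (SimpleGraph.edge v w)) (X v - X w) := by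
  wlog hvw : v < w generalizing v w
  · rw [SimpleGraph.edge_comm, ← neg_sub]
    exact (this h.symm (h.lt_or_gt.resolve_left hvw)).neg_right
  have hpair (p : V × V) : (SimpleGraph.edge v w).Adj p.1 p.2 ∧ p.1 < p.2 ↔ p = (v, w) := by
    obtain ⟨a, b⟩ := p
    simp only [SimpleGraph.edge_adj, Prod.mk.injEq]
    grind
  have hpoly : graphPoly (SimpleGraph.edge v w) = X w - X v := by
    simp [graphPoly, hpair, filter_eq']
  rw [hpoly, ← neg_sub]
  exact (Associated.refl _).neg_left

-- `deleteIncidenceSet z` isolates `z` instead of removing it, so that all graphs live on `V`.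
lemma associated_graphPoly_deleteIncidenceSet (hN : ∀ u, u ∈ N ↔ H.Adj z u) :
    Associated (graphPoly H)
      (graphPoly (H.deleteIncidenceSet z) * ∏ u ∈ N, (X z - X u)) := by
  induction N using Finset.induction_on generalizing H with
  | empty =>
    have hdel : H.deleteIncidenceSet z = H := by
      ext a b
      simp only [notMem_empty, false_iff] at hN
      rw [SimpleGraph.deleteIncidenceSet_adj]
      grind [SimpleGraph.adj_comm]
    simp [hdel]
  | insert u N huN ih =>
    have hzu : H.Adj z u := (hN u).1 (mem_insert_self u N)
    have hadj (x : V) : x ∈ N ↔ (H \ SimpleGraph.edge z u).Adj z x := by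
      simp only [SimpleGraph.sdiff_adj, SimpleGraph.edge_adj, ← hN, mem_insert]
      grind [hzu.ne]
    have hdel : (H \ SimpleGraph.edge z u).deleteIncidenceSet z = H.deleteIncidenceSet z := by
      ext a b
      simp only [SimpleGraph.deleteIncidenceSet_adj, SimpleGraph.sdiff_adj, SimpleGraph.edge_adj]
      grind
    have hsup : H \ SimpleGraph.edge z u ⊔ SimpleGraph.edge z u = H :=
      sdiff_sup_cancel ((SimpleGraph.edge_le_iff H).2 (.inr hzu))
    rw [← hsup, graphPoly_sup disjoint_sdiff_self_left, hsup, prod_insert huN,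
      mul_comm (X z - X u), ← mul_assoc, ← hdel]
    exact (ih hadj).mul_mul (associated_graphPoly_edge hzu.ne)

lemma exists_adj_of_mem_vars_graphPoly (h : z ∈ (graphPoly H).vars) : ∃ u, H.Adj z u := by
  classical
  obtain ⟨p, hp, hz⟩ := mem_biUnion.1 (vars_prod _ h)
  have hadj : H.Adj p.1 p.2 := (mem_filter.1 hp).2.1
  have hmem := vars_sub_subset _ hz
  simp only [vars_X, mem_union, mem_singleton] at hmem
  rcases hmem with rfl | rfl
  · exact ⟨_, hadj.symm⟩
  · exact ⟨_, hadj⟩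

lemma notMem_vars_graphPoly_deleteIncidenceSet :
    z ∉ (graphPoly (H.deleteIncidenceSet z)).vars := fun h ↦ by
  obtain ⟨u, hu⟩ := exists_adj_of_mem_vars_graphPoly h
  exact (SimpleGraph.deleteIncidenceSet_adj.1 hu).2.1 rfl

lemma exists_isHomogeneous_graphPoly (H : SimpleGraph V) : ∃ n, (graphPoly H).IsHomogeneous n :=
  ⟨_, IsHomogeneous.prod _ _ _ fun _ _ ↦ (isHomogeneous_X _ _).sub (isHomogeneous_X _ _)⟩

lemma mem_support_graphPoly_of_deleteIncidenceSet
    (hη : η ∈ (graphPoly (H.deleteIncidenceSet z)).support) (hN : ∀ u, u ∈ N ↔ H.Adj z u)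
    (hQN : Q ⊆ N) (hηQ : ∀ u ∈ Q, η u = 0) :
    η + ∑ u ∈ N \ Q, Finsupp.single u 1 + Finsupp.single z #Q ∈ (graphPoly H).support := by
  rw [support_eq_of_associated (associated_graphPoly_deleteIncidenceSet hN)]
  exact mem_support_mul_prod_X_sub_X hη
    (mem_support_notMem_vars_zero hη notMem_vars_graphPoly_deleteIncidenceSet)
    (fun h ↦ ((hN z).1 h).ne rfl) hQN hηQ

lemma mem_support_graphPoly_or_exists_exchange
    (hη : η ∈ (graphPoly (H.deleteIncidenceSet z)).support) (hN : ∀ u, u ∈ N ↔ H.Adj z u)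
    (hv : v ∈ N) (hw : w ∈ N) (hvw : v ≠ w) (hηv : η v = 0) :
    η + ∑ u ∈ N \ {v, w}, Finsupp.single u 1 + Finsupp.single z 2 ∈ (graphPoly H).support ∨
      ∃ κ, κ + Finsupp.single w 1 = η ∧ ∃ u ∈ N \ {v, w},
        κ + Finsupp.single u 1 ∈ (graphPoly (H.deleteIncidenceSet z)).support := by
  have hz : z ∉ N := fun h ↦ ((hN z).1 h).ne rfl
  refine (mem_support_mul_prod_X_sub_X_or_exists_exchange hη
    notMem_vars_graphPoly_deleteIncidenceSet (N := N \ {v, w}) (by simp [hz])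
    (fun h : z = w ↦ hz (h ▸ hw)) (by simp)).imp_left fun h ↦ ?_
  have hprod : ∏ u ∈ N, (X z - X u : MvPolynomial V ℝ) =
      (∏ u ∈ insert w (N \ {v, w}), (X z - X u)) * (X z - X v) := by
    rw [← prod_erase_mul N _ hv]; congr 2; grind
  have hzv : z ≠ v := fun h ↦ hz (h ▸ hv)
  rw [support_eq_of_associated (associated_graphPoly_deleteIncidenceSet hN), hprod, ← mul_assoc,
    mem_support_iff, ← one_add_one_eq_two, Finsupp.single_add, ← add_assoc,
    coeff_add_single_mul_X_sub_X _ hzv]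
  · exact mem_support_iff.1 h
  · rw [Finsupp.add_apply, Finsupp.add_apply, hηv, sum_single_one_apply_of_notMem (by simp),
      Finsupp.single_eq_of_ne hzv.symm, add_zero, add_zero]

end GraphPoly

section Minors

open SimpleGraph

variable {V : Type*} {G : SimpleGraph V} {A B T W : Set V} {x y z : V}

/-- The vertices adjacent to a member of `A`; those lying inside `A` are not excluded. -/
def neighborhood (G : SimpleGraph V) (A : Set V) : Set V := {v | ∃ a ∈ A, G.Adj a v}

lemma mem_neighborhood : x ∈ neighborhood G A ↔ ∃ a ∈ A, G.Adj a x := Iff.rfl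

lemma neighborhood_insert (x : V) (A : Set V) :
    neighborhood G (insert x A) = neighborhood G A ∪ G.neighborSet x := by
  ext v
  simp [mem_neighborhood, or_comm]

lemma neighborhood_mono (h : A ⊆ B) : neighborhood G A ⊆ neighborhood G B :=
  fun _ ⟨a, ha, hav⟩ ↦ ⟨a, h ha, hav⟩

lemma connected_induce_singleton (x : V) : (G.induce {x}).Connected :=
  Connected.of_subsingleton

lemma connected_induce_insert (hA : (G.induce A).Preconnected) (hx : x ∈ neighborhood G A) :
    (G.induce (insert x A)).Connected := by
  obtain ⟨a, ha, hax⟩ := hx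
  rw [← Set.union_singleton]
  exact connected_induce_union hA (connected_induce_singleton x).preconnected ha
    (Set.mem_singleton x) hax

lemma exists_separation_of_not_preconnected_induce (h : ¬(G.induce T).Preconnected) :
    ∃ D ⊆ T, D.Nonempty ∧ (T \ D).Nonempty ∧ ∀ a ∈ D, ∀ b ∈ T \ D, ¬G.Adj a b := by
  simp only [Preconnected, not_forall] at h
  obtain ⟨u, v, huv⟩ := h
  refine ⟨(↑) '' {x | (G.induce T).Reachable u x}, Subtype.coe_image_subset _ _,
    ⟨u, u, .refl u, rfl⟩, ⟨v, v.2, fun ⟨x, hx, hxv⟩ ↦ huv (Subtype.ext hxv ▸ hx)⟩, ?_⟩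
  rintro _ ⟨a, ha, rfl⟩ b ⟨hbT, hb⟩ hab
  have hadj : (G.induce T).Adj a ⟨b, hbT⟩ := hab
  exact hb ⟨⟨b, hbT⟩, Reachable.trans ha hadj.reachable, rfl⟩

/-- Branch sets exhibiting the complete graph on `ι` as a minor of `G`. -/
structure IsCompleteMinorModel {ι : Type*} (G : SimpleGraph V) (f : ι → Set V) : Prop where
  connected i : (G.induce (f i)).Connected
  disjoint : Pairwise (Function.onFun Disjoint f)
  adj : Pairwise fun i j ↦ ∃ a ∈ f i, ∃ b ∈ f j, G.Adj a b

lemma IsCompleteMinorModel.isMinor {ι : Type*} {f : ι → Set V} (hf : IsCompleteMinorModel G f) :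
    IsMinor (completeGraph ι) G :=
  ⟨f, hf.connected, fun _ _ h ↦ hf.disjoint h, fun _ _ h ↦ hf.adj h⟩

lemma IsCompleteMinorModel.cons {n : ℕ} {f : Fin n → Set V} (hf : IsCompleteMinorModel G f)
    (hA : (G.induce A).Connected) (hdisj : ∀ i, Disjoint A (f i))
    (hadj : ∀ i, ∃ a ∈ A, ∃ b ∈ f i, G.Adj a b) :
    IsCompleteMinorModel G (Fin.cons A f : Fin (n + 1) → Set V) where
  connected := Fin.cases hA hf.connected
  disjoint := by
    refine Fin.cases (Fin.cases (by simp) fun j _ ↦ hdisj j) fun i ↦ Fin.cases ?_ fun j hij ↦ ?_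
    · exact fun _ ↦ (hdisj i).symm
    · exact hf.disjoint (by simpa using hij)
  adj := by
    refine Fin.cases (Fin.cases (by simp) fun j _ ↦ hadj j) fun i ↦ Fin.cases ?_ fun j hij ↦ ?_
    · rintro -
      obtain ⟨a, ha, b, hb, hab⟩ := hadj i
      exact ⟨b, hb, a, ha, hab.symm⟩
    · exact hf.adj (by simpa using hij)

lemma isMinor_completeBipartiteGraph {ι κ : Type*} {f : ι → Set V} {y : κ → V}
    (hconn : ∀ i, (G.induce (f i)).Connected) (hdisj : Pairwise (Function.onFun Disjoint f))
    (hy : Function.Injective y) (hyf : ∀ i j, y j ∉ f i)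
    (hadj : ∀ i j, y j ∈ neighborhood G (f i)) :
    IsMinor (completeBipartiteGraph ι κ) G := by
  refine ⟨Sum.elim f fun j ↦ {y j}, ?_, ?_, ?_⟩
  · rintro (i | j)
    · exact hconn i
    · exact connected_induce_singleton (y j)
  · rintro (i | j) (i' | j') hne
    · exact hdisj fun h ↦ hne (congrArg Sum.inl h)
    · exact Set.disjoint_singleton_right.2 (hyf i j')
    · exact Set.disjoint_singleton_left.2 (hyf i' j)
    · exact Set.disjoint_singleton.2 fun h ↦ hne (congrArg Sum.inr (hy h))
  · rintro (i | j) (i' | j') h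
    · simp at h
    · obtain ⟨a, ha, hay⟩ := hadj i j'
      exact ⟨a, ha, y j', rfl, hay⟩
    · obtain ⟨a, ha, hay⟩ := hadj i' j
      exact ⟨y j, rfl, a, ha, hay.symm⟩
    · simp at h

/-- The set `W` of interior vertices of a connection between `x` and `y`; it is empty when the
connection is an edge. -/
def IsLink (G : SimpleGraph V) (W : Set V) (x y : V) : Prop :=
  (W = ∅ ∧ G.Adj x y) ∨
    ((G.induce W).Connected ∧ x ∈ neighborhood G W ∧ y ∈ neighborhood G W)

lemma exists_isLink_of_isPath {p : G.Walk x y} (hp : p.IsPath) (hxy : x ≠ y) :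
    ∃ W ⊆ {v | v ∈ p.support} \ {x, y}, IsLink G W x y := by
  cases p with
  | nil => exact absurd rfl hxy
  | @cons _ b _ hxb q =>
    obtain ⟨hq, hxq⟩ := (Walk.cons_isPath_iff hxb q).1 hp
    cases q with
    | nil => exact ⟨∅, Set.empty_subset _, .inl ⟨rfl, hxb⟩⟩
    | cons hbc q =>
      obtain ⟨c, r, hcy, hr⟩ := Walk.exists_cons_eq_concat hbc q
      rw [hr, Walk.concat_isPath_iff] at hq
      rw [hr, Walk.support_concat, List.mem_append, not_or] at hxq
      refine ⟨{v | v ∈ r.support}, fun v hv ↦ ⟨?_, ?_⟩,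
        .inr ⟨r.connected_induce_support, ⟨b, r.start_mem_support, hxb.symm⟩,
          ⟨c, r.end_mem_support, hcy⟩⟩⟩
      · rw [hr]
        simp only [Set.mem_ofPred_eq] at hv
        simp [Walk.support_concat, hv]
      · rintro (rfl | rfl)
        · exact hxq.1 hv
        · exact hq.2 hv

lemma exists_isLink (hT : (G.induce T).Preconnected) (hx : x ∈ T) (hy : y ∈ T) (hxy : x ≠ y) :
    ∃ W ⊆ T \ {x, y}, IsLink G W x y := by
  obtain ⟨p, hp⟩ := (hT ⟨x, hx⟩ ⟨y, hy⟩).exists_isPath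
  obtain ⟨W, hW, hlink⟩ := exists_isLink_of_isPath
    (hp.map (f := (Embedding.induce T).toHom) Subtype.val_injective) hxy
  refine ⟨W, hW.trans (Set.sdiff_subset_sdiff_left fun v hv ↦ ?_), hlink⟩
  obtain ⟨v, -, rfl⟩ := List.mem_map.1 ((Walk.support_map _ p) ▸ hv)
  exact v.2

lemma IsLink.connected_insert (h : IsLink G W x y) : (G.induce (insert x W)).Connected := by
  rcases h with ⟨rfl, -⟩ | ⟨hW, hx, -⟩
  · rw [insert_empty_eq]; exact connected_induce_singleton x
  · exact connected_induce_insert hW.preconnected hx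

lemma IsLink.exists_adj (h : IsLink G W x y) : ∃ a ∈ insert x W, G.Adj a y := by
  rcases h with ⟨-, hxy⟩ | ⟨-, -, a, ha, hay⟩
  · exact ⟨x, Set.mem_insert x W, hxy⟩
  · exact ⟨a, Set.mem_insert_of_mem x ha, hay⟩

lemma isMinor_completeBipartiteGraph_of_tripod {y : Fin 3 → V} (hA : (G.induce A).Connected)
    (hW : (G.induce W).Connected) (hAW : Disjoint A W) (hzA : z ∉ A) (hzW : z ∉ W)
    (hy : Function.Injective y) (hyA : ∀ i, y i ∈ neighborhood G A \ A)
    (hyW : ∀ i, y i ∈ neighborhood G W \ W) (hyz : ∀ i, G.Adj z (y i)) :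
    IsMinor (completeBipartiteGraph (Fin 3) (Fin 3)) G := by
  refine isMinor_completeBipartiteGraph (f := ![A, {z}, W]) (y := y) ?_ ?_ hy ?_ ?_
  · simp [Fin.forall_fin_succ, hA, hW]
  · intro i j hij
    fin_cases i <;> fin_cases j <;>
      simp_all [Function.onFun, hAW.symm]
  · intro i j
    fin_cases i
    exacts [(hyA j).2, fun h ↦ (hyz j).ne' h, (hyW j).2]
  · intro i j
    fin_cases i
    exacts [(hyA j).1, ⟨z, rfl, hyz j⟩, (hyW j).1]

-- Each branch set is `y i` together with the interior of its link to `y (i + 2)`.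
lemma isCompleteMinorModel_of_links {y : Fin 3 → V} {W : Fin 3 → Set V}
    (hlink : ∀ i, IsLink G (W (i + 1)) (y i) (y (i + 2)))
    (hy : Function.Injective y) (hyW : ∀ i j, y i ∉ W j)
    (hW : Pairwise (Function.onFun Disjoint W)) :
    IsCompleteMinorModel G fun i ↦ insert (y i) (W (i + 1)) where
  connected i := (hlink i).connected_insert
  disjoint i j hij := by
    simp only [Function.onFun, Set.disjoint_insert_left, Set.disjoint_insert_right,
      Set.mem_insert_iff, not_or]
    exact ⟨⟨hy.ne hij.symm, hyW _ _⟩, hyW _ _, hW (by simpa using hij)⟩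
  adj i j hij := by
    have hadj (i : Fin 3) : ∃ a ∈ insert (y i) (W (i + 1)), G.Adj a (y (i + 2)) :=
      (hlink i).exists_adj
    rcases (by omega : j = i + 2 ∨ i = j + 2) with rfl | rfl
    · obtain ⟨a, ha, hay⟩ := hadj i
      exact ⟨a, ha, _, Set.mem_insert _ _, hay⟩
    · obtain ⟨a, ha, hay⟩ := hadj j
      exact ⟨_, Set.mem_insert _ _, a, ha, hay.symm⟩

lemma isMinor_completeGraph_of_links {y : Fin 3 → V} {W : Fin 3 → Set V}
    (hA : (G.induce A).Connected) (hz : z ∈ neighborhood G A \ A)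
    (hlink : ∀ i, IsLink G (W (i + 1)) (y i) (y (i + 2)))
    (hy : Function.Injective y) (hyW : ∀ i j, y i ∉ W j)
    (hW : Pairwise (Function.onFun Disjoint W)) (hAW : ∀ i, Disjoint A (W i))
    (hzW : ∀ i, z ∉ W i) (hyA : ∀ i, y i ∈ neighborhood G A \ A) (hyz : ∀ i, G.Adj z (y i)) :
    IsMinor (completeGraph (Fin 5)) G := by
  obtain ⟨⟨a, ha, haz⟩, hzA⟩ := hz
  refine (((isCompleteMinorModel_of_links hlink hy hyW hW).cons (A := {z})
    (connected_induce_singleton z) (fun i ↦ ?_) fun i ↦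
      ⟨z, rfl, y i, Set.mem_insert _ _, hyz i⟩).cons (A := A) hA ?_ ?_).isMinor
  · simp [(hyz i).ne, hzW]
  · refine Fin.cases (Set.disjoint_singleton_right.2 hzA) fun i ↦ ?_
    exact Set.disjoint_insert_right.2 ⟨(hyA i).2, hAW _⟩
  · refine Fin.cases ⟨a, ha, z, rfl, haz⟩ fun i ↦ ?_
    obtain ⟨b, hb, hby⟩ := (hyA i).1
    exact ⟨b, hb, y i, Set.mem_insert _ _, hby⟩

lemma IsLink.connected_of_nonempty (h : IsLink G W x y) (hW : W.Nonempty) :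
    (G.induce W).Connected ∧ x ∈ neighborhood G W ∧ y ∈ neighborhood G W :=
  h.resolve_left fun h ↦ hW.ne_empty h.1

lemma exists_not_preconnected_induce_sdiff_of_isPlanar {y : Fin 3 → V} (hG : G.IsPlanar)
    (hA : (G.induce A).Preconnected) (hzA : z ∈ neighborhood G A \ A)
    (hAT : Disjoint A T) (hzT : z ∉ T) (hy : Function.Injective y) (hyT : ∀ i, y i ∈ T)
    (hyA : ∀ i, y i ∈ neighborhood G A) (hyz : ∀ i, G.Adj z (y i)) :
    ∃ i, ¬(G.induce (T \ {y i})).Preconnected := by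
  by_contra! hT
  obtain ⟨⟨a, ha, haz⟩, hzA⟩ := hzA
  have hA' : (G.induce A).Connected := { preconnected := hA, nonempty := ⟨⟨a, ha⟩⟩ }
  have hyA' (i : Fin 3) : y i ∉ A := Set.disjoint_right.1 hAT (hyT i)
  have hlinks (k : Fin 3) : ∃ W ⊆ T \ Set.range y, IsLink G W (y (k + 2)) (y (k + 1)) := by
    obtain ⟨W, hW, hlink⟩ := exists_isLink (hT k) (x := y (k + 2)) (y := y (k + 1))
      ⟨hyT _, hy.ne (by omega)⟩ ⟨hyT _, hy.ne (by omega)⟩ (hy.ne (by omega))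
    refine ⟨W, fun v hv ↦ ⟨(hW hv).1.1, ?_⟩, hlink⟩
    rintro ⟨l, rfl⟩
    have hlk := hW hv
    rcases (by omega : l = k ∨ l = k + 1 ∨ l = k + 2) with rfl | rfl | rfl <;> simp at hlk
  choose W hWT hlink using hlinks
  have hyW (i k : Fin 3) : y i ∉ W k := fun h ↦ (hWT k h).2 ⟨i, rfl⟩
  have hAW (k : Fin 3) : Disjoint A (W k) :=
    hAT.mono_right ((hWT k).trans Set.sdiff_subset)
  have hzW (k : Fin 3) : z ∉ W k := fun h ↦ hzT (hWT k h).1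
  by_cases hW : Pairwise (Function.onFun Disjoint W)
  · refine hG.1 (isMinor_completeGraph_of_links hA' ⟨⟨a, ha, haz⟩, hzA⟩ (fun i ↦ ?_) hy hyW hW
      hAW hzW (fun i ↦ ⟨hyA i, hyA' i⟩) hyz)
    simpa [add_assoc, show (2 : Fin 3) + 1 = 0 from rfl] using hlink (i + 1)
  · simp only [Pairwise, not_forall, Function.onFun] at hW
    obtain ⟨k, l, hkl, hWkl⟩ := hW
    rw [Set.not_disjoint_iff_nonempty_inter] at hWkl
    have hk := (hlink k).connected_of_nonempty hWkl.left
    have hl := (hlink l).connected_of_nonempty hWkl.right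
    refine hG.2 (isMinor_completeBipartiteGraph_of_tripod hA'
      (induce_union_connected hk.1.preconnected hl.1.preconnected hWkl)
      (Set.disjoint_union_right.2 ⟨hAW k, hAW l⟩) hzA (by simp [hzW]) hy
      (fun i ↦ ⟨hyA i, hyA' i⟩) (fun i ↦ ⟨?_, by simp [hyW]⟩) hyz)
    rcases (by omega : i = k + 2 ∨ i = k + 1 ∨ i = l + 2 ∨ i = l + 1) with rfl | rfl | rfl | rfl
    exacts [neighborhood_mono Set.subset_union_left hk.2.1,
      neighborhood_mono Set.subset_union_left hk.2.2,
      neighborhood_mono Set.subset_union_right hl.2.1,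
      neighborhood_mono Set.subset_union_right hl.2.2]

end Minors

section AlonTarsiMatching

open SimpleGraph

variable {V : Type*} {G : SimpleGraph V}

lemma isMatching_sup_subgraphOfAdj {M : G.Subgraph} (hM : M.IsMatching) {u z : V}
    (hzu : G.Adj z u) (hz : z ∉ M.verts) (hu : u ∉ M.verts) :
    (M ⊔ G.subgraphOfAdj hzu).IsMatching :=
  hM.sup (Subgraph.IsMatching.subgraphOfAdj hzu) <| by
    rw [hM.support_eq_verts, support_subgraphOfAdj]
    simp [hz, hu]

lemma exists_isMatching_adj_or_mem {M : G.Subgraph} (hM : M.IsMatching) {u z : V}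
    (hzu : G.Adj z u) (hz : z ∉ M.verts) :
    ∃ M' : G.Subgraph, M'.IsMatching ∧ M'.verts ⊆ insert z (insert u M.verts) ∧
      (∀ a b, a ≠ z → b ≠ z → (M.Adj a b ↔ M'.Adj a b)) ∧ (M'.Adj z u ∨ u ∈ M.verts) := by
  by_cases hu : u ∈ M.verts
  · exact ⟨M, hM, fun x hx ↦ .inr (.inr hx), fun _ _ _ _ ↦ Iff.rfl, .inr hu⟩
  · refine ⟨_, isMatching_sup_subgraphOfAdj hM hzu hz hu, fun x hx ↦ ?_, fun a b ha hb ↦ ?_,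
      .inl (by simp)⟩
    · simp only [Subgraph.verts_sup, subgraphOfAdj_verts] at hx
      grind
    · simp only [Subgraph.sup_adj, subgraphOfAdj_adj]
      grind

variable {M M' : G.Subgraph} {S T T' P Q R : Finset V} {B B' W W' : Set V}
  {v w x z : V}

/-- What is left of `G[S]` once the edges joining two roots and the edges of `M` are deleted. -/
def residualGraph (G : SimpleGraph V) (S R : Finset V) (M : G.Subgraph) : SimpleGraph V where
  Adj u v := G.Adj u v ∧ u ∈ S ∧ v ∈ S ∧ ¬(u ∈ R ∧ v ∈ R) ∧ ¬M.Adj u v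
  symm := ⟨fun _ _ ⟨huv, hu, hv, hR, hM⟩ ↦
    ⟨huv.symm, hv, hu, fun h ↦ hR h.symm, fun h ↦ hM h.symm⟩⟩
  loopless := ⟨fun _ h ↦ h.1.ne rfl⟩

lemma residualGraph_adj {u v : V} : (residualGraph G S R M).Adj u v ↔
    G.Adj u v ∧ u ∈ S ∧ v ∈ S ∧ ¬(u ∈ R ∧ v ∈ R) ∧ ¬M.Adj u v := Iff.rfl

lemma residualGraph_deleteIncidenceSet [DecidableEq V]
    (hM : ∀ u v, u ≠ z → v ≠ z → (M.Adj u v ↔ M'.Adj u v)) :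
    (residualGraph G S R M).deleteIncidenceSet z =
      residualGraph G (S.erase z) (R.erase z) M' := by
  ext u v
  simp only [deleteIncidenceSet_adj, residualGraph_adj, mem_erase]
  grind

open scoped Classical in
/-- The largest exponent allowed at `x`: the monomials live on `T`, vertices of the outer boundary
`B` have one unit less than the others, and vertices of `B` matched by `W` another unit less. -/
noncomputable def exponentBound (T : Finset V) (B W : Set V) (x : V) : ℕ :=
  if x ∈ T then if x ∈ B then if x ∈ W then 1 else 2 else 3 else 0

lemma exponentBound_le_three : exponentBound T B W x ≤ 3 := by
  unfold exponentBound; split_ifs <;> omega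

lemma one_le_exponentBound (hx : x ∈ T) : 1 ≤ exponentBound T B W x := by
  unfold exponentBound; split_ifs <;> omega

lemma two_le_exponentBound (hx : x ∈ T) (hW : x ∉ W) : 2 ≤ exponentBound T B W x := by
  unfold exponentBound; split_ifs <;> omega

lemma exponentBound_of_notMem_boundary (hx : x ∈ T) (hB : x ∉ B) : exponentBound T B W x = 3 := by
  simp [exponentBound, hx, hB]

lemma exponentBound_le_two (hB : x ∈ B) : exponentBound T B W x ≤ 2 := by
  unfold exponentBound; split_ifs <;> omega

lemma exponentBound_le_one (hB : x ∈ B) (hW : x ∈ W) : exponentBound T B W x ≤ 1 := by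
  unfold exponentBound; split_ifs <;> omega

lemma exponentBound_le (h : x ∈ T' → x ∈ T ∧ (x ∈ B → x ∈ B' ∧ (x ∈ W → x ∈ W'))) :
    exponentBound T' B' W' x ≤ exponentBound T B W x := by
  unfold exponentBound; split_ifs <;> first | omega | grind

variable [Fintype V] [LinearOrder V] {η : V →₀ ℕ}

/-- The strengthened form of the theorem that is proved by induction: after deleting the edges
between the roots `R`, the graph `G[S]` has a matching avoiding the roots whose removal leaves a
monomial of the graph polynomial with no root variable and with the exponents of the boundary
vertices `B` restricted by `exponentBound`. -/
def HasAlonTarsiMatching (G : SimpleGraph V) (S : Finset V) (B : Set V) (R : Finset V) : Prop :=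
  ∃ M : G.Subgraph, M.IsMatching ∧ M.verts ⊆ ↑(S \ R) ∧
    ∃ η ∈ (graphPoly (residualGraph G S R M)).support, ∀ x, η x ≤ exponentBound (S \ R) B M.verts x

namespace HasAlonTarsiMatching

lemma empty : HasAlonTarsiMatching G ∅ B ∅ := by
  have hbot : residualGraph G ∅ ∅ ⊥ = ⊥ := by ext; simp [residualGraph_adj]
  exact ⟨⊥, by simp [Subgraph.IsMatching], by simp, 0, by simp [hbot], by simp⟩

lemma mono (h : HasAlonTarsiMatching G S B' R) (hB : ∀ x ∈ S, x ∈ B → x ∈ B') :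
    HasAlonTarsiMatching G S B R := by
  obtain ⟨M, hM, hMS, η, hη, hle⟩ := h
  exact ⟨M, hM, hMS, η, hη, fun x ↦ (hle x).trans <| exponentBound_le fun hx ↦
    ⟨hx, fun hxB ↦ ⟨hB x (mem_sdiff.1 hx).1 hxB, id⟩⟩⟩

lemma of_deleteIncidenceSet (hM : M.IsMatching) (hMS : M.verts ⊆ ↑(S \ R))
    (hη : η ∈ (graphPoly ((residualGraph G S R M).deleteIncidenceSet z)).support)
    (hQ : ∀ u ∈ Q, (residualGraph G S R M).Adj z u ∧ η u = 0)
    (hQz : #Q ≤ exponentBound (S \ R) B M.verts z)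
    (hle : ∀ x, η x ≤ exponentBound (S \ R) B M.verts x)
    (hlt : ∀ u, (residualGraph G S R M).Adj z u → u ∉ Q →
      η u < exponentBound (S \ R) B M.verts u) :
    HasAlonTarsiMatching G S B R := by
  classical
  let N := univ.filter ((residualGraph G S R M).Adj z)
  have hN (u : V) : u ∈ N ↔ (residualGraph G S R M).Adj z u := by simp [N]
  refine ⟨M, hM, hMS, _, mem_support_graphPoly_of_deleteIncidenceSet hη hN
    (fun u hu ↦ (hN u).2 (hQ u hu).1) fun u hu ↦ (hQ u hu).2, fun x ↦ ?_⟩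
  have hηz : η z = 0 := mem_support_notMem_vars_zero hη notMem_vars_graphPoly_deleteIncidenceSet
  simp only [Finsupp.add_apply, sum_single_one_apply, mem_sdiff, hN]
  rcases eq_or_ne x z with rfl | hxz
  · simpa [hηz] using hQz
  · rw [Finsupp.single_eq_of_ne hxz, add_zero]
    split_ifs with hx
    · exact hlt x hx.1 hx.2
    · exact hle x

lemma of_erase (hR : #R ≤ 2) (hz : z ∈ S) (hzB : ∀ u ∈ S, G.Adj z u → u ∈ B → u ∈ R)
    (h : HasAlonTarsiMatching G (S.erase z) (B ∪ G.neighborSet z) (R.erase z)) :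
    HasAlonTarsiMatching G S B R := by
  classical
  obtain ⟨M, hM, hMS, η, hη, hle⟩ := h
  have hzM : z ∉ M.verts := fun h ↦ by simpa using hMS h
  have hsub : S.erase z \ R.erase z ⊆ S \ R := fun x ↦ by
    simp only [mem_sdiff, mem_erase]; tauto
  have hadj {u : V} : (residualGraph G S R M).Adj z u ↔
      G.Adj z u ∧ u ∈ S ∧ ¬(z ∈ R ∧ u ∈ R) := by
    have : ¬M.Adj z u := fun h ↦ hzM h.fst_mem
    simp [residualGraph_adj, hz, this]
  rw [← residualGraph_deleteIncidenceSet (fun _ _ _ _ ↦ Iff.rfl)] at hη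
  refine of_deleteIncidenceSet (Q := R.filter ((residualGraph G S R M).Adj z)) hM
    (hMS.trans (coe_subset.2 hsub)) hη (fun u hu ↦ ?_) ?_ (fun x ↦ (hle x).trans <|
      exponentBound_le fun hx ↦ ⟨hsub hx, fun hxB ↦ ⟨.inl hxB, id⟩⟩) fun u hu huQ ↦ ?_
  · obtain ⟨huR, hzu⟩ := mem_filter.1 hu
    exact ⟨hzu, by simpa [exponentBound, huR, hzu.ne'] using hle u⟩
  · by_cases hzR : z ∈ R
    · rw [filter_false_of_mem fun u hu h ↦ (hadj.1 h).2.2 ⟨hzR, hu⟩]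
      exact Nat.zero_le _
    · exact ((card_filter_le _ _).trans hR).trans
        (two_le_exponentBound (mem_sdiff.2 ⟨hz, hzR⟩) hzM)
  · have huR : u ∉ R := fun h ↦ huQ (mem_filter.2 ⟨h, hu⟩)
    obtain ⟨hzu, huS, -⟩ := hadj.1 hu
    rw [exponentBound_of_notMem_boundary (mem_sdiff.2 ⟨huS, huR⟩) fun h ↦ huR (hzB u huS hzu h)]
    exact (hle u).trans_lt (Nat.lt_succ_of_le (exponentBound_le_two (.inr hzu)))

lemma of_singleton (h : HasAlonTarsiMatching G S B {z}) : HasAlonTarsiMatching G S B ∅ := by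
  obtain ⟨M, hM, hMS, η, hη, hle⟩ := h
  have hsub : S \ {z} ⊆ S \ ∅ := sdiff_subset_sdiff le_rfl (empty_subset _)
  have hres : residualGraph G S ∅ M = residualGraph G S {z} M := by
    ext a b
    simp only [residualGraph_adj, notMem_empty, mem_singleton]
    grind [G.irrefl]
  exact ⟨M, hM, hMS.trans (coe_subset.2 hsub), η, hres ▸ hη, fun x ↦
    (hle x).trans <| exponentBound_le fun hx ↦ ⟨hsub hx, fun hxB ↦ ⟨hxB, id⟩⟩⟩

lemma union (hR : R ⊆ P) (hPQ : ∀ a ∈ P \ Q, ∀ b ∈ Q \ P, ¬G.Adj a b)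
    (h₁ : HasAlonTarsiMatching G P B R) (h₂ : HasAlonTarsiMatching G Q B (P ∩ Q)) :
    HasAlonTarsiMatching G (P ∪ Q) B R := by
  obtain ⟨M₁, hM₁, hMS₁, η₁, hη₁, hle₁⟩ := h₁
  obtain ⟨M₂, hM₂, hMS₂, η₂, hη₂, hle₂⟩ := h₂
  have hM₁P {x : V} (hx : x ∈ M₁.verts) : x ∈ P \ R := by simpa using hMS₁ hx
  have hM₂Q {x : V} (hx : x ∈ M₂.verts) : x ∈ Q \ P := by
    have := mem_sdiff.1 (mem_coe.1 (hMS₂ hx))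
    simp only [mem_sdiff, mem_inter] at this ⊢; tauto
  have hη₁P {x : V} (hx : x ∉ P) : η₁ x = 0 := by simpa [exponentBound, hx] using hle₁ x
  have hη₂P {x : V} (hx : x ∈ P) : η₂ x = 0 := by simpa [exponentBound, hx] using hle₂ x
  have hsup : residualGraph G (P ∪ Q) R (M₁ ⊔ M₂) =
      residualGraph G P R M₁ ⊔ residualGraph G Q (P ∩ Q) M₂ := by
    ext a b
    have hM₁' {x y : V} (h : M₁.Adj x y) := And.intro (hM₁P h.fst_mem) (hM₁P h.snd_mem)
    have hM₂' {x y : V} (h : M₂.Adj x y) := And.intro (hM₂Q h.fst_mem) (hM₂Q h.snd_mem)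
    simp only [residualGraph_adj, sup_adj, Subgraph.sup_adj, mem_union, mem_inter]
    grind [G.adj_comm]
  have hdisj : Disjoint (residualGraph G P R M₁) (residualGraph G Q (P ∩ Q) M₂) := by
    refine disjoint_left.2 fun a b h₁ h₂ ↦ ?_
    simp only [residualGraph_adj, mem_inter] at h₁ h₂
    tauto
  refine ⟨M₁ ⊔ M₂, hM₁.sup hM₂ ?_, ?_, η₁ + η₂, ?_, fun x ↦ ?_⟩
  · rw [hM₁.support_eq_verts, hM₂.support_eq_verts]
    exact Set.disjoint_left.2 fun x hx₁ hx₂ ↦ (mem_sdiff.1 (hM₂Q hx₂)).2 (mem_sdiff.1 (hM₁P hx₁)).1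
  · rintro x (hx | hx)
    · exact sdiff_subset_sdiff subset_union_left le_rfl (hM₁P hx)
    · exact sdiff_subset_sdiff subset_union_right hR (hM₂Q hx)
  · obtain ⟨n, hn⟩ := exists_isHomogeneous_graphPoly (residualGraph G Q (P ∩ Q) M₂)
    rw [hsup, graphPoly_sup hdisj]
    refine add_mem_support_mul_of_isHomogeneous hn hη₁ hη₂ fun x hx ↦ ?_
    obtain ⟨u, hu⟩ := exists_adj_of_mem_vars_graphPoly hx
    exact hη₂P hu.2.1
  · by_cases hx : x ∈ P
    · rw [Finsupp.add_apply, hη₂P hx, add_zero]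
      exact (hle₁ x).trans <| exponentBound_le (by grind [Subgraph.verts_sup])
    · rw [Finsupp.add_apply, hη₁P hx, zero_add]
      exact (hle₂ x).trans <| exponentBound_le (by grind [Subgraph.verts_sup])

lemma of_exchange {κ : V →₀ ℕ} {u : V} (hM : M.IsMatching) (hMS : M.verts ⊆ ↑(S.erase z \ R))
    (hv : v ∈ S ∩ R) (hz : z ∈ S \ R) (hzv : G.Adj z v) (huS : u ∈ S) (hzu : G.Adj z u)
    (huv : u ≠ v) (huw : u ≠ w)
    (hN : ∀ x ∈ S, G.Adj z x → x ≠ v → x ≠ w → x ∈ S \ R ∧ x ∉ B)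
    (hle : ∀ x, (κ + Finsupp.single w 1 : V →₀ ℕ) x ≤
      exponentBound (S.erase z \ R) (B ∪ G.neighborSet z) M.verts x)
    (hκ : κ + Finsupp.single u 1 ∈ (graphPoly (residualGraph G (S.erase z) R M)).support) :
    HasAlonTarsiMatching G S B R := by
  obtain ⟨huSR, huB⟩ := hN u huS hzu huv huw
  obtain ⟨hvS, hvR⟩ := mem_inter.1 hv
  have hzM : z ∉ M.verts := fun h ↦ by simpa using hMS h
  obtain ⟨M', hM', hMS', hMM', hu⟩ := exists_isMatching_adj_or_mem hM hzu hzM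
  have hMS'' : M'.verts ⊆ ↑(S \ R) := hMS'.trans <| Set.insert_subset hz <|
    Set.insert_subset huSR <|
      hMS.trans (coe_subset.2 (sdiff_subset_sdiff (erase_subset z S) le_rfl))
  have hκ₂ {x : V} (hzx : G.Adj z x) : κ x ≤ 2 :=
    (le_self_add.trans (hle x)).trans (exponentBound_le_two (.inr hzx))
  have hle' (x : V) : (κ + Finsupp.single w 1 : V →₀ ℕ) x ≤ exponentBound (S \ R) B M'.verts x :=
    (hle x).trans <| exponentBound_le fun hx ↦ by grind
  rw [← erase_eq_of_notMem (mem_sdiff.1 hz).2, ← residualGraph_deleteIncidenceSet fun a b ha hb ↦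
    (hMM' a b ha hb).symm] at hκ
  refine of_deleteIncidenceSet (Q := {v}) hM' hMS'' hκ ?_ (one_le_exponentBound hz) (fun x ↦ ?_)
    fun x hx hxv ↦ ?_
  · have hvM' : ¬M'.Adj z v := fun h ↦ (mem_sdiff.1 (hMS'' h.snd_mem)).2 hvR
    have hκv : κ v = 0 := (by simpa [exponentBound, hvR] using hle v : κ v = 0 ∧ _).1
    simp [residualGraph_adj, mem_sdiff.1 hz, hzv, hvS, hvM', hκv, huv]
  · rcases eq_or_ne x u with rfl | hxu
    · rw [exponentBound_of_notMem_boundary huSR huB, Finsupp.add_apply, Finsupp.single_eq_same]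
      exact Nat.succ_le_succ (hκ₂ hzu)
    · rw [Finsupp.add_apply, Finsupp.single_eq_of_ne hxu]
      exact (Nat.le_add_right _ _).trans (hle' x)
  · obtain ⟨hzx, -, hxS, -, hxM'⟩ := hx
    rcases eq_or_ne x w with rfl | hxw
    · rw [Finsupp.add_apply, Finsupp.single_eq_of_ne huw.symm]
      simpa using hle' x
    obtain ⟨hxSR, hxB⟩ := hN x hxS hzx (by simpa using hxv) hxw
    rw [exponentBound_of_notMem_boundary hxSR hxB, Finsupp.add_apply, Nat.lt_succ_iff]
    rcases eq_or_ne x u with rfl | hxu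
    · rw [Finsupp.single_eq_same]
      exact Nat.succ_le_succ <| (le_self_add.trans (hle x)).trans <|
        exponentBound_le_one (.inr hzu) (hu.resolve_left hxM')
    · rw [Finsupp.single_eq_of_ne hxu]
      exact hκ₂ hzx

-- The first alternative of `mem_support_graphPoly_or_exists_exchange` keeps the matching. In the
-- second, a unit of exponent moves from `w`, which then has room for its edge to `z`, to `u`: this
-- is harmless if `u` is already matched, and otherwise the edge `zu` joins the matching.
lemma of_erase_of_chord (hv : v ∈ S ∩ R) (hw : w ∈ S \ R) (hz : z ∈ S \ R) (hzv : G.Adj z v)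
    (hzw : G.Adj z w) (hzB : ∀ u ∈ S, G.Adj z u → u ∈ B ∨ u ∈ R → u = v ∨ u = w)
    (h : HasAlonTarsiMatching G (S.erase z) (B ∪ G.neighborSet z) R) :
    HasAlonTarsiMatching G S B R := by
  classical
  obtain ⟨M, hM, hMS, η, hη, hle⟩ := h
  have hzM : z ∉ M.verts := fun h ↦ by simpa using hMS h
  have hMS' : M.verts ⊆ ↑(S \ R) :=
    hMS.trans (coe_subset.2 (sdiff_subset_sdiff (erase_subset z S) le_rfl))
  have hadj {u : V} : (residualGraph G S R M).Adj z u ↔ G.Adj z u ∧ u ∈ S := by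
    have : ¬M.Adj z u := fun h ↦ hzM h.fst_mem
    simp [residualGraph_adj, mem_sdiff.1 hz, this]
  let N := univ.filter ((residualGraph G S R M).Adj z)
  have hN (u : V) : u ∈ N ↔ (residualGraph G S R M).Adj z u := by simp [N]
  have hdel : (residualGraph G S R M).deleteIncidenceSet z = residualGraph G (S.erase z) R M := by
    rw [residualGraph_deleteIncidenceSet fun _ _ _ _ ↦ Iff.rfl,
      erase_eq_of_notMem (mem_sdiff.1 hz).2]
  have hfree (u : V) (huS : u ∈ S) (hzu : G.Adj z u) (huv : u ≠ v) (huw : u ≠ w) :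
      u ∈ S \ R ∧ u ∉ B := by
    have := hzB u huS hzu
    simp only [mem_sdiff]; tauto
  have hvw : v ≠ w := by rintro rfl; simp_all
  have hηv : η v = 0 := by simpa [exponentBound, (mem_inter.1 hv).2] using hle v
  rcases mem_support_graphPoly_or_exists_exchange (by rwa [hdel]) hN
    ((hN v).2 (hadj.2 ⟨hzv, (mem_inter.1 hv).1⟩)) ((hN w).2 (hadj.2 ⟨hzw, (mem_sdiff.1 hw).1⟩))
    hvw hηv with h | ⟨κ, rfl, u, hu, hκ⟩
  · refine ⟨M, hM, hMS', _, h, fun x ↦ ?_⟩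
    simp only [Finsupp.add_apply, sum_single_one_apply, mem_sdiff, hN]
    rcases eq_or_ne x z with rfl | hxz
    · have hηz : η x = 0 := by simpa [exponentBound] using hle x
      simpa [hηz, hadj] using two_le_exponentBound hz hzM
    rw [Finsupp.single_eq_of_ne hxz, add_zero]
    split_ifs with hx
    · simp only [hadj, mem_insert, mem_singleton, not_or] at hx
      obtain ⟨hxSR, hxB⟩ := hfree x hx.1.2 hx.1.1 hx.2.1 hx.2.2
      rw [exponentBound_of_notMem_boundary hxSR hxB]
      exact Nat.succ_le_succ ((hle x).trans (exponentBound_le_two (.inr hx.1.1)))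
    · exact (hle x).trans <| exponentBound_le fun hx ↦ by grind
  · simp only [mem_sdiff, hN, mem_insert, mem_singleton, not_or, hadj] at hu
    obtain ⟨⟨hzu, huS⟩, huv, huw⟩ := hu
    exact of_exchange hM hMS hv hz hzv huS hzu huv huw hfree hle (hdel ▸ hκ)

end HasAlonTarsiMatching

end AlonTarsiMatching

section Planar

variable {V : Type*} {G : SimpleGraph V}

lemma exists_union_eq_of_not_preconnected_induce [DecidableEq V] {S Z : Finset V} (hZ : Z ⊆ S)
    (h : ¬(G.induce (↑S \ ↑Z : Set V)).Preconnected) :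
    ∃ P ⊂ S, ∃ Q ⊂ S, P ∪ Q = S ∧ P ∩ Q = Z ∧ ∀ a ∈ P \ Q, ∀ b ∈ Q \ P, ¬G.Adj a b := by
  classical
  obtain ⟨D, hD, ⟨d, hd⟩, ⟨e, he⟩, hDe⟩ := exists_separation_of_not_preconnected_induce h
  have hD' {x : V} (hx : x ∈ D) : x ∈ S ∧ x ∉ Z := by simpa using hD hx
  have he' : (e ∈ S ∧ e ∉ Z) ∧ e ∉ D := by simpa using he
  refine ⟨{x ∈ S | x ∈ D ∨ x ∈ Z}, filter_ssubset.2 ⟨e, he'.1.1, by tauto⟩,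
    {x ∈ S | x ∉ D}, filter_ssubset.2 ⟨d, (hD' hd).1, by simpa⟩, ?_, ?_, fun a ha b hb ↦ ?_⟩
  · ext x; simp only [mem_union, mem_filter]; tauto
  · ext x; simp only [mem_inter, mem_filter]
    have := @hZ x; have := @hD' x; tauto
  · simp only [mem_sdiff, mem_filter] at ha hb
    refine hDe a (by tauto) b ⟨?_, hb.1.2⟩
    simp only [Set.mem_sdiff, mem_coe]; tauto

lemma subset_or_subset_of_isClique [DecidableEq V] {P Q R : Finset V} (hR : G.IsClique R)
    (hRPQ : R ⊆ P ∪ Q) (hPQ : ∀ a ∈ P \ Q, ∀ b ∈ Q \ P, ¬G.Adj a b) : R ⊆ P ∨ R ⊆ Q := by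
  by_contra! ⟨hP, hQ⟩
  obtain ⟨b, hb, hbP⟩ := not_subset.1 hP
  obtain ⟨a, ha, haQ⟩ := not_subset.1 hQ
  have haP : a ∈ P := (mem_union.1 (hRPQ ha)).resolve_right haQ
  have hbQ : b ∈ Q := (mem_union.1 (hRPQ hb)).resolve_left hbP
  exact hPQ a (mem_sdiff.2 ⟨haP, haQ⟩) b (mem_sdiff.2 ⟨hbQ, hbP⟩)
    (hR ha hb (ne_of_mem_of_not_mem haP hbP))

/-- The configurations of the induction: `A` is the set of vertices deleted so far, which surrounds
the part `S` of `G` still to be treated, and the roots `R` span at most an edge on the boundary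
`neighborhood G A` of `S`. -/
structure IsRooted (G : SimpleGraph V) (A : Set V) (S R : Finset V) : Prop where
  preconnected : (G.induce A).Preconnected
  disjoint : Disjoint A ↑S
  subset : R ⊆ S
  subset_neighborhood : ↑R ⊆ neighborhood G A
  isClique : G.IsClique R
  card_le : #R ≤ 2

namespace IsRooted

variable {A : Set V} {S T R : Finset V} {c v w z : V}

lemma subset_left (h : IsRooted G A S R) (hTS : T ⊆ S) (hRT : R ⊆ T) : IsRooted G A T R :=
  { h with disjoint := h.disjoint.mono_right (coe_subset.2 hTS), subset := hRT }

lemma singleton (h : IsRooted G A S R) (hv : v ∈ S) (hvA : v ∈ neighborhood G A) :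
    IsRooted G A S {v} :=
  { h with
    subset := by simpa
    subset_neighborhood := by simpa
    isClique := by simp
    card_le := by simp }

lemma pair [DecidableEq V] (h : IsRooted G A S R) (hz : z ∈ S) (hc : c ∈ S)
    (hzA : z ∈ neighborhood G A) (hcA : c ∈ neighborhood G A) (hzc : G.Adj z c) :
    IsRooted G A S {z, c} :=
  { h with
    subset := by grind
    subset_neighborhood := by grind
    isClique := by simp [SimpleGraph.isClique_insert, hzc]
    card_le := card_le_two }

lemma erase [DecidableEq V] (h : IsRooted G A S R) (hz : z ∈ neighborhood G A) :
    IsRooted G (insert z A) (S.erase z) (R.erase z) where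
  preconnected := (connected_induce_insert h.preconnected hz).preconnected
  disjoint := by
    have := Set.disjoint_left.1 h.disjoint
    exact Set.disjoint_left.2 (by grind)
  subset := erase_subset_erase z h.subset
  subset_neighborhood := by
    rw [neighborhood_insert]
    exact (coe_subset.2 (erase_subset z R)).trans
      (h.subset_neighborhood.trans Set.subset_union_left)
  isClique := h.isClique.subset (coe_subset.2 (erase_subset z R))
  card_le := (card_le_card (erase_subset z R)).trans h.card_le

variable [Fintype V] [LinearOrder V]

lemma hasAlonTarsiMatching_of_chord (h : IsRooted G A S R) (hz : z ∈ S) (hc : c ∈ S)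
    (hzA : z ∈ neighborhood G A) (hcA : c ∈ neighborhood G A) (hzc : G.Adj z c)
    (hcut : ¬(G.induce (↑S \ {z, c} : Set V)).Preconnected)
    (ih : ∀ T ⊂ S, ∀ Q, IsRooted G A T Q → HasAlonTarsiMatching G T (neighborhood G A) Q) :
    HasAlonTarsiMatching G S (neighborhood G A) R := by
  obtain ⟨P, hP, Q, hQ, hPQS, hPQ, hadj⟩ :=
    exists_union_eq_of_not_preconnected_induce (h.pair hz hc hzA hcA hzc).subset (by rwa [coe_pair])
  have hroot (T : Finset V) (hT : T ⊂ S) (hR : R ⊆ T) :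
      HasAlonTarsiMatching G T (neighborhood G A) R :=
    ih T hT R (h.subset_left hT.1 hR)
  have hchord (T : Finset V) (hT : T ⊂ S) (hPQT : P ∩ Q ⊆ T) :
      HasAlonTarsiMatching G T (neighborhood G A) (P ∩ Q) :=
    ih T hT _ (hPQ ▸ (h.pair hz hc hzA hcA hzc).subset_left hT.1 (hPQ ▸ hPQT))
  rw [← hPQS]
  rcases subset_or_subset_of_isClique h.isClique (hPQS.symm ▸ h.subset) hadj with hR | hR
  · exact (hroot P hP hR).union hR hadj (hchord Q hQ inter_subset_right)
  · rw [union_comm]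
    refine (hroot Q hQ hR).union hR (fun a ha b hb hab ↦ hadj b hb a ha hab.symm) ?_
    rw [inter_comm]
    exact hchord P hP inter_subset_left

lemma hasAlonTarsiMatching_of_injective (hG : G.IsPlanar) (h : IsRooted G A S R) (hz : z ∈ S)
    (hzA : z ∈ neighborhood G A) {y : Fin 3 → V} (hy : Function.Injective y)
    (hyz : ∀ i, y i ∈ S ∧ y i ∈ neighborhood G A ∧ G.Adj z (y i))
    (ih : ∀ T ⊂ S, ∀ A' Q, IsRooted G A' T Q → HasAlonTarsiMatching G T (neighborhood G A') Q) :
    HasAlonTarsiMatching G S (neighborhood G A) R := by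
  obtain ⟨i, hi⟩ := exists_not_preconnected_induce_sdiff_of_isPlanar (T := ↑S \ {z}) hG
    h.preconnected ⟨hzA, Set.disjoint_right.1 h.disjoint hz⟩
    (h.disjoint.mono_right Set.sdiff_subset) (by simp) hy
    (fun i ↦ ⟨(hyz i).1, (hyz i).2.2.ne'⟩) (fun i ↦ (hyz i).2.1) fun i ↦ (hyz i).2.2
  rw [Set.sdiff_sdiff, Set.singleton_union] at hi
  exact h.hasAlonTarsiMatching_of_chord hz (hyz i).1 hzA (hyz i).2.1 (hyz i).2.2 hi
    fun T hT ↦ ih T hT A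

lemma hasAlonTarsiMatching_of_root (hG : G.IsPlanar) (h : IsRooted G A S R) (hv : v ∈ R)
    (ih : ∀ T ⊂ S, ∀ A' Q, IsRooted G A' T Q → HasAlonTarsiMatching G T (neighborhood G A') Q) :
    HasAlonTarsiMatching G S (neighborhood G A) R := by
  have herase {x : V} (hx : x ∈ S) (hxA : x ∈ neighborhood G A) :
      HasAlonTarsiMatching G (S.erase x) (neighborhood G A ∪ G.neighborSet x) (R.erase x) :=
    neighborhood_insert x A ▸ ih _ (erase_ssubset hx) _ _ (h.erase hxA)
  have hvS := h.subset hv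
  have hvA := h.subset_neighborhood hv
  by_cases hz : ∀ u ∈ S, G.Adj v u → u ∈ neighborhood G A → u ∈ R
  · exact .of_erase h.card_le hvS hz (herase hvS hvA)
  push Not at hz
  obtain ⟨z, hzS, hvz, hzA, hzR⟩ := hz
  by_cases hw : ∀ u ∈ S, G.Adj z u → u ∈ neighborhood G A → u ∈ R
  · exact .of_erase h.card_le hzS hw (herase hzS hzA)
  push Not at hw
  obtain ⟨w, hwS, hzw, hwA, hwR⟩ := hw
  by_cases hy : ∀ u ∈ S, G.Adj z u → u ∈ neighborhood G A → u = v ∨ u = w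
  · refine .of_erase_of_chord (mem_inter.2 ⟨hvS, hv⟩) (mem_sdiff.2 ⟨hwS, hwR⟩)
      (mem_sdiff.2 ⟨hzS, hzR⟩) hvz.symm hzw (fun u huS hzu hu ↦
        hy u huS hzu (hu.elim id (h.subset_neighborhood ·))) ?_
    exact erase_eq_of_notMem hzR ▸ herase hzS hzA
  push Not at hy
  obtain ⟨y, hyS, hzy, hyA, hyv, hyw⟩ := hy
  have hvw : v ≠ w := ne_of_mem_of_not_mem hv hwR
  have hinj : Function.Injective ![v, w, y] := by
    simp only [Matrix.vecCons, Fin.cons_injective_iff]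
    simp [hvw, hyv.symm, hyw.symm, Function.injective_of_subsingleton]
  refine h.hasAlonTarsiMatching_of_injective hG hzS hzA hinj ?_ ih
  simp [Fin.forall_fin_succ, hvS, hvA, hvz.symm, hwS, hwA, hzw, hyS, hyA, hzy]

theorem hasAlonTarsiMatching (hG : G.IsPlanar) (h : IsRooted G A S R) :
    HasAlonTarsiMatching G S (neighborhood G A) R := by
  induction S using Finset.strongInduction generalizing A R with
  | H S ih =>
  have ih' : ∀ T ⊂ S, ∀ A' Q, IsRooted G A' T Q →
      HasAlonTarsiMatching G T (neighborhood G A') Q := fun T hT _ _ h ↦ ih T hT h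
  rcases R.eq_empty_or_nonempty with rfl | ⟨v, hv⟩
  swap
  · exact h.hasAlonTarsiMatching_of_root hG hv ih'
  by_cases hSA : ∃ v ∈ S, v ∈ neighborhood G A
  · obtain ⟨v, hv, hvA⟩ := hSA
    exact .of_singleton <|
      (h.singleton hv hvA).hasAlonTarsiMatching_of_root hG (mem_singleton_self v) ih'
  push Not at hSA
  rcases S.eq_empty_or_nonempty with rfl | ⟨a, ha⟩
  · exact .empty
  have hrooted : IsRooted G {a} (S.erase a) ∅ :=
    ⟨(connected_induce_singleton a).preconnected, by simp, by simp, by simp, by simp, by simp⟩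
  refine .of_erase (by simp) ha (fun u hu _ huA ↦ (hSA u hu huA).elim) ?_
  rw [erase_empty]
  exact (ih _ (erase_ssubset ha) hrooted).mono fun x hx hxB ↦
    ⟨a, rfl, hxB.resolve_left (hSA x (mem_of_mem_erase hx))⟩

end IsRooted

end Planar

/- Every planar graph contains a matching `M` such that `AT(G - M) ≤ 4`. -/
theorem stmt_9 {V : Type*} [Fintype V] [LinearOrder V] (G : SimpleGraph V)
    (hG : G.IsPlanar) :
    ∃ M : G.Subgraph, M.IsMatching ∧
      ∃ η : V →₀ ℕ, (∀ v, η v ≤ 3) ∧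
        MvPolynomial.coeff η (graphPoly (G.deleteEdges M.edgeSet)) ≠ 0 := by
  have hrooted : IsRooted G ∅ univ ∅ := ⟨by simp [SimpleGraph.Preconnected], by simp, by simp,
    by simp, by simp, by simp⟩
  obtain ⟨M, hM, -, η, hη, hle⟩ := hrooted.hasAlonTarsiMatching hG
  refine ⟨M, hM, η, fun v ↦ (hle v).trans exponentBound_le_three, ?_⟩
  have hres : residualGraph G univ ∅ M = G.deleteEdges M.edgeSet := by
    ext a b
    simp [residualGraph_adj, SimpleGraph.deleteEdges_adj]
  exact hres ▸ mem_support_iff.1 hη
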